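/- From approximate to strict Rényi-entropy inequalities, min-entropy case (Proposition, part (i)): Let d ≥ 2, let p, q ∈ ℝ^d be probability vectors, let η_∞ ≥ 0 satisfy S_∞(p) ≤ S_∞(q) + η_∞, and let α > 1. Set ε := 4·√( (ln d)/α + η_∞ ) and assume ε ≤ 1/2. Then S_α(p) ≤ S_α(q̃(ε)) − min{ η_∞, ln d − S₁(p) }. -/

import Mathlib

/-- A probability vector: nonnegative entries summing to one. -/
def IsProbVec {d : ℕ} (p : Fin d → ℝ) : Prop :=
  (∀ i, 0 ≤ p i) ∧ ∑ i, p i = 1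

/-- ℓ¹ distance between two vectors. -/
def l1Dist {d : ℕ} (p q : Fin d → ℝ) : ℝ :=
  ∑ i, |p i - q i|

/-- The uniform probability vector on `d` outcomes. -/
noncomputable def unif (d : ℕ) : Fin d → ℝ := fun _ => 1 / d

/-- The smoothed vector `q̃(ε)`: the uniform vector if `q` is `ε`-close to uniform in ℓ¹,
otherwise the mixture `(1−ε)q + ε·u_d`. -/
noncomputable def smoothed {d : ℕ} (q : Fin d → ℝ) (ε : ℝ) : Fin d → ℝ :=
  if l1Dist q (unif d) < ε then unif d else fun i => (1 - ε) * q i + ε * (1 / d)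

/-- Rényi entropy `S_α(p) = (1/(1−α)) ln Σᵢ pᵢ^α` (real powers, `0^α = 0` for `α > 0`). -/
noncomputable def renyiEntropy (α : ℝ) {d : ℕ} (p : Fin d → ℝ) : ℝ :=
  (1 - α)⁻¹ * Real.log (∑ i, p i ^ α)

/-- Shannon entropy `S₁(p) = −Σᵢ pᵢ ln pᵢ` (with `0 ln 0 = 0`). -/
noncomputable def shannonEntropy {d : ℕ} (p : Fin d → ℝ) : ℝ :=
  -∑ i, p i * Real.log (p i)

/-- Min-entropy `S_∞(p) = −ln maxᵢ pᵢ`. -/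
noncomputable def minEntropy {d : ℕ} (p : Fin d → ℝ) : ℝ :=
  -Real.log (⨆ i, p i)

/-- Tsallis entropy: `T_α(p) = (1 − Σᵢ pᵢ^α)/(α−1)` for `α ≠ 1`, Shannon entropy at `α = 1`. -/
noncomputable def tsallisEntropy (α : ℝ) {d : ℕ} (p : Fin d → ℝ) : ℝ :=
  if α = 1 then shannonEntropy p else (1 - ∑ i, p i ^ α) / (α - 1)

/-!
Two comparisons of the Rényi entropy with the min-entropy drive the argument: for `α > 1`,
`S_∞ ≤ S_α ≤ S_∞ + (ln d) / α`. The second one turns the hypothesis on min-entropies into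
`S_α(p) ≤ S_∞(q) + η + (ln d) / α`. If `q` is at ℓ¹ distance at least `ε` from uniform, then
`d · max q ≥ 1 + ε / 2`, so mixing in the uniform vector with weight `ε` shrinks the maximum by a
factor `1 - ε² / 3` and raises the min-entropy by at least `ε² / 3`, which beats the error terms;
the first comparison returns to `S_α`. If `q` is `ε`-close to uniform, then `q̃(ε)` has the maximal
entropy `ln d`, which exceeds `S_α(p)` by at least `ln d - S₁(p)`.
-/

section

variable {d : ℕ} {p q : Fin d → ℝ} {α ε : ℝ}

namespace IsProbVec

lemma dim_pos (hp : IsProbVec p) : 0 < d := by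
  rcases Nat.eq_zero_or_pos d with rfl | hd
  · simpa using hp.2
  · exact hd

lemma one_le_dim_mul_iSup (hp : IsProbVec p) : 1 ≤ d * ⨆ i, p i := by
  calc (1 : ℝ) = ∑ i, p i := hp.2.symm
    _ ≤ ∑ _i : Fin d, ⨆ j, p j := Finset.sum_le_sum fun i _ => Finite.le_ciSup p i
    _ = d * ⨆ i, p i := by simp

lemma iSup_pos (hp : IsProbVec p) : 0 < ⨆ i, p i :=
  pos_of_mul_pos_right (one_pos.trans_le hp.one_le_dim_mul_iSup) d.cast_nonneg

lemma iSup_rpow_le_sum_rpow (hp : IsProbVec p) : (⨆ i, p i) ^ α ≤ ∑ i, p i ^ α := by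
  have : Nonempty (Fin d) := Fin.pos_iff_nonempty.mp hp.dim_pos
  obtain ⟨i, hi⟩ := exists_eq_ciSup_of_finite (f := p)
  rw [← hi]
  exact Finset.single_le_sum (f := fun j => p j ^ α)
    (fun j _ => Real.rpow_nonneg (hp.1 j) α) (Finset.mem_univ i)

lemma sum_rpow_pos (hp : IsProbVec p) : 0 < ∑ i, p i ^ α :=
  (Real.rpow_pos_of_pos hp.iSup_pos α).trans_le hp.iSup_rpow_le_sum_rpow

lemma convexCombination (hp : IsProbVec p) (hq : IsProbVec q) (hε₀ : 0 ≤ ε) (hε₁ : ε ≤ 1) :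
    IsProbVec ((1 - ε) • p + ε • q) :=
  convex_stdSimplex ℝ (Fin d) hp hq (sub_nonneg.2 hε₁) hε₀ (sub_add_cancel 1 ε)

end IsProbVec

lemma isProbVec_unif (hd : d ≠ 0) : IsProbVec (unif d) :=
  ⟨fun _ => by unfold unif; positivity, by simp [unif, hd]⟩

lemma log_sum_rpow_eq (hα : α ≠ 1) : Real.log (∑ i, p i ^ α) = (1 - α) * renyiEntropy α p := by
  rw [renyiEntropy, mul_inv_cancel_left₀ (sub_ne_zero.2 hα.symm)]

lemma renyiEntropy_unif (hd : d ≠ 0) (hα : α ≠ 1) : renyiEntropy α (unif d) = Real.log d := by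
  have hd' : (0 : ℝ) < d := by positivity
  have hlog : Real.log (∑ i, unif d i ^ α) = (1 - α) * Real.log d := by
    simp only [unif, Finset.sum_const, Finset.card_univ, Fintype.card_fin, nsmul_eq_mul]
    rw [Real.log_mul hd'.ne' (by positivity), Real.log_rpow (by positivity), one_div, Real.log_inv]
    ring
  rw [renyiEntropy, hlog, inv_mul_cancel_left₀ (sub_ne_zero.2 hα.symm)]

lemma renyiEntropy_le_shannonEntropy (hp : IsProbVec p) (hα : 1 < α) :
    renyiEntropy α p ≤ shannonEntropy p := by
  have hterm (i : Fin d) : p i * Real.exp ((α - 1) * Real.log (p i)) = p i ^ α := by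
    rcases (hp.1 i).eq_or_lt with hi | hi
    · rw [← hi, Real.zero_rpow (by linarith), zero_mul]
    · rw [mul_comm (α - 1), ← Real.rpow_def_of_pos hi, Real.rpow_sub_one hi.ne',
        mul_div_cancel₀ _ hi.ne']
  have hjensen : Real.exp ((1 - α) * shannonEntropy p) ≤ ∑ i, p i ^ α := by
    calc Real.exp ((1 - α) * shannonEntropy p)
        = Real.exp (∑ i, p i • ((α - 1) * Real.log (p i))) := by
          simp only [shannonEntropy, smul_eq_mul, mul_left_comm (p _), ← Finset.mul_sum]
          ring_nf
      _ ≤ ∑ i, p i • Real.exp ((α - 1) * Real.log (p i)) :=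
          convexOn_exp.map_sum_le (fun i _ => hp.1 i) hp.2 fun _ _ => Set.mem_univ _
      _ = ∑ i, p i ^ α := Finset.sum_congr rfl fun i _ => hterm i
  rw [← Real.le_log_iff_exp_le hp.sum_rpow_pos, log_sum_rpow_eq hα.ne'] at hjensen
  exact (mul_le_mul_left_of_neg (sub_neg.2 hα)).1 hjensen

lemma renyiEntropy_le_log_dim (hp : IsProbVec p) (hα : 1 < α) :
    renyiEntropy α p ≤ Real.log d := by
  have hd : (0 : ℝ) < d := Nat.cast_pos.2 hp.dim_pos
  have hpow : 1 ≤ (d : ℝ) ^ (α - 1) * ∑ i, p i ^ α := by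
    simpa [hp.2] using Real.rpow_sum_le_const_mul_sum_rpow_of_nonneg Finset.univ hα.le
      fun i _ => hp.1 i
  have hlog := Real.log_nonneg hpow
  rw [Real.log_mul (by positivity) hp.sum_rpow_pos.ne', Real.log_rpow hd,
    log_sum_rpow_eq hα.ne'] at hlog
  nlinarith

lemma renyiEntropy_le_minEntropy_add_log_dim_div (hp : IsProbVec p) (hα : 1 < α) :
    renyiEntropy α p ≤ minEntropy p + Real.log d / α := by
  have hα₀ : 0 < α := one_pos.trans hα
  have hmax : (α - 1) * renyiEntropy α p ≤ α * minEntropy p := by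
    have hlog := Real.log_le_log (Real.rpow_pos_of_pos hp.iSup_pos α) hp.iSup_rpow_le_sum_rpow
    rw [Real.log_rpow hp.iSup_pos, log_sum_rpow_eq hα.ne'] at hlog
    rw [minEntropy]
    linarith
  have hscaled : renyiEntropy α p * α ≤ minEntropy p * α + Real.log d := by
    linarith [renyiEntropy_le_log_dim hp hα]
  rw [← sub_le_iff_le_add', le_div_iff₀ hα₀, sub_mul]
  linarith

lemma minEntropy_le_renyiEntropy (hp : IsProbVec p) (hα : 1 < α) :
    minEntropy p ≤ renyiEntropy α p := by
  have hsum : ∑ i, p i ^ α ≤ (⨆ i, p i) ^ (α - 1) := by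
    calc ∑ i, p i ^ α = ∑ i, p i * p i ^ (α - 1) := Finset.sum_congr rfl fun i _ => by
          rw [← Real.rpow_one_add' (hp.1 i) (by linarith), add_sub_cancel]
      _ ≤ ∑ i, p i * (⨆ j, p j) ^ (α - 1) := Finset.sum_le_sum fun i _ =>
          mul_le_mul_of_nonneg_left
            (Real.rpow_le_rpow (hp.1 i) (Finite.le_ciSup p i) (by linarith)) (hp.1 i)
      _ = (⨆ i, p i) ^ (α - 1) := by rw [← Finset.sum_mul, hp.2, one_mul]
  have hlog := Real.log_le_log hp.sum_rpow_pos hsum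
  rw [Real.log_rpow hp.iSup_pos, log_sum_rpow_eq hα.ne'] at hlog
  rw [minEntropy]
  nlinarith

lemma l1Dist_unif_le (hp : IsProbVec p) : l1Dist p (unif d) ≤ 2 * (d * (⨆ i, p i) - 1) := by
  have hunif := isProbVec_unif hp.dim_pos.ne'
  have hM : 1 / (d : ℝ) ≤ ⨆ i, p i :=
    (div_le_iff₀' (Nat.cast_pos.2 hp.dim_pos)).2 hp.one_le_dim_mul_iSup
  -- `|x| = 2 * max x 0 - x`, and the terms `-x` cancel in the sum.
  have hterm (i : Fin d) :
      |p i - unif d i| ≤ 2 * ((⨆ j, p j) - unif d i) - (p i - unif d i) := by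
    have hi := Finite.le_ciSup p i
    simp only [unif]
    rw [abs_le]
    constructor <;> linarith
  calc l1Dist p (unif d)
      ≤ ∑ i, (2 * ((⨆ j, p j) - unif d i) - (p i - unif d i)) :=
        Finset.sum_le_sum fun i _ => hterm i
    _ = 2 * (d * (⨆ i, p i) - 1) := by
        simp only [Finset.sum_sub_distrib, ← Finset.mul_sum, hp.2, hunif.2, Finset.sum_const,
          Finset.card_univ, Fintype.card_fin, nsmul_eq_mul]
        ring

lemma smoothed_of_lt (h : l1Dist q (unif d) < ε) : smoothed q ε = unif d := if_pos h

lemma smoothed_of_le (h : ε ≤ l1Dist q (unif d)) :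
    smoothed q ε = (1 - ε) • q + ε • unif d := if_neg h.not_gt

lemma IsProbVec.smoothed (hq : IsProbVec q) (hε₀ : 0 ≤ ε) (hε₁ : ε ≤ 1) :
    IsProbVec (smoothed q ε) := by
  have hunif := isProbVec_unif hq.dim_pos.ne'
  rcases lt_or_ge (l1Dist q (unif d)) ε with hclose | hfar
  · rwa [smoothed_of_lt hclose]
  · rw [smoothed_of_le hfar]
    exact hq.convexCombination hunif hε₀ hε₁

lemma iSup_smoothed_le_mul (hq : IsProbVec q) (hε₀ : 0 ≤ ε) (hε₁ : ε ≤ 1)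
    (hfar : ε ≤ l1Dist q (unif d)) :
    ⨆ i, smoothed q ε i ≤ (⨆ i, q i) * (1 - ε ^ 2 / 3) := by
  have hd : (0 : ℝ) < d := Nat.cast_pos.2 hq.dim_pos
  have : Nonempty (Fin d) := Fin.pos_iff_nonempty.mp hq.dim_pos
  set M := ⨆ i, q i
  have hgap : 1 + ε / 2 ≤ d * M := by linarith [l1Dist_unif_le hq]
  have hunif : 1 / (d : ℝ) ≤ M * (1 - ε / 3) := by
    rw [div_le_iff₀' hd]
    nlinarith
  rw [smoothed_of_le hfar]
  refine ciSup_le fun i => ?_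
  calc (1 - ε) * q i + ε * (1 / d)
      ≤ (1 - ε) * M + ε * (M * (1 - ε / 3)) :=
        add_le_add (mul_le_mul_of_nonneg_left (Finite.le_ciSup q i) (sub_nonneg.2 hε₁))
          (mul_le_mul_of_nonneg_left hunif hε₀)
    _ = M * (1 - ε ^ 2 / 3) := by ring

lemma minEntropy_add_sq_div_three_le_smoothed (hq : IsProbVec q) (hε₀ : 0 ≤ ε) (hε₁ : ε ≤ 1)
    (hfar : ε ≤ l1Dist q (unif d)) :
    minEntropy q + ε ^ 2 / 3 ≤ minEntropy (smoothed q ε) := by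
  have hfactor : 0 < 1 - ε ^ 2 / 3 := by nlinarith
  have hlog := Real.log_le_log (hq.smoothed hε₀ hε₁).iSup_pos (iSup_smoothed_le_mul hq hε₀ hε₁ hfar)
  rw [Real.log_mul hq.iSup_pos.ne' hfactor.ne'] at hlog
  simp only [minEntropy]
  linarith [Real.log_le_sub_one_of_pos hfactor]

theorem approx_to_strict_renyi_minEntropy_general {η δ : ℝ} (hp : IsProbVec p) (hq : IsProbVec q)
    (hS : minEntropy p ≤ minEntropy q + η) (hα : 1 < α) (hε₀ : 0 ≤ ε) (hε₁ : ε ≤ 1)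
    (hε : Real.log d / α + η + δ ≤ ε ^ 2 / 3) :
    renyiEntropy α p ≤
      renyiEntropy α (smoothed q ε) - min δ (Real.log d - renyiEntropy α p) := by
  rcases lt_or_ge (l1Dist q (unif d)) ε with hclose | hfar
  · rw [smoothed_of_lt hclose, renyiEntropy_unif hp.dim_pos.ne' hα.ne']
    linarith [min_le_right δ (Real.log d - renyiEntropy α p)]
  · calc renyiEntropy α p
        ≤ minEntropy p + Real.log d / α := renyiEntropy_le_minEntropy_add_log_dim_div hp hα
      _ ≤ minEntropy q + ε ^ 2 / 3 - δ := by linarith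
      _ ≤ minEntropy (smoothed q ε) - δ :=
          sub_le_sub_right (minEntropy_add_sq_div_three_le_smoothed hq hε₀ hε₁ hfar) δ
      _ ≤ renyiEntropy α (smoothed q ε) - min δ (Real.log d - renyiEntropy α p) :=
          sub_le_sub (minEntropy_le_renyiEntropy (hq.smoothed hε₀ hε₁) hα) (min_le_left _ _)

end

/-- From approximate to strict Rényi-entropy inequalities, min-entropy case:
if `S_∞(p) ≤ S_∞(q) + η_∞` and `α > 1`, then with `ε = 4√(ln d/α + η_∞) ≤ 1/2` one has
`S_α(p) ≤ S_α(q̃(ε)) − min{η_∞, ln d − S₁(p)}`. -/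
theorem approx_to_strict_renyi_minEntropy (d : ℕ) (hd : 2 ≤ d)
    (p q : Fin d → ℝ) (hp : IsProbVec p) (hq : IsProbVec q)
    (ηinf : ℝ) (hηinf : 0 ≤ ηinf) (hS : minEntropy p ≤ minEntropy q + ηinf)
    (α : ℝ) (hα : 1 < α)
    (ε : ℝ) (hε : ε = 4 * Real.sqrt (Real.log d / α + ηinf)) (hε12 : ε ≤ 1 / 2) :
    renyiEntropy α p ≤
      renyiEntropy α (smoothed q ε) - min ηinf (Real.log d - shannonEntropy p) := by
  have hlogd : 0 ≤ Real.log d / α := by positivity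
  have hε2 : ε ^ 2 = 16 * (Real.log d / α + ηinf) := by
    rw [hε, mul_pow, Real.sq_sqrt (by positivity)]
    norm_num
  refine (approx_to_strict_renyi_minEntropy_general hp hq hS hα (hε ▸ by positivity)
    (by linarith) (by linarith : Real.log d / α + ηinf + ηinf ≤ ε ^ 2 / 3)).trans ?_
  gcongr
  exact renyiEntropy_le_shannonEntropy hp hα
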